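/- If K₁ and K₂ are compact sets in ℂⁿ and p is a holomorphic polynomial on ℂⁿ such that the polynomially convex hulls (in ℂ) of p(K₁) and p(K₂) are disjoint, then the polynomially convex hull of K₁ ∪ K₂ equals K̂₁ ∪ K̂₂, the union of the polynomially convex hulls of K₁ and K₂. -/

import Mathlib

open Set Filter Topology

noncomputable section

/-- Evaluation of a multivariate polynomial as a function on `ℂⁿ = Fin n → ℂ`. -/
def mvEval {n : ℕ} (p : MvPolynomial (Fin n) ℂ) : (Fin n → ℂ) → ℂ :=
  fun z => MvPolynomial.eval z p

/-- The polynomially convex hull of a set in `ℂⁿ`. -/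
def polyHull {n : ℕ} (K : Set (Fin n → ℂ)) : Set (Fin n → ℂ) :=
  {z | ∀ p : MvPolynomial (Fin n) ℂ, ‖mvEval p z‖ ≤ sSup ((fun w => ‖mvEval p w‖) '' K)}

/-- A set in `ℂⁿ` is polynomially convex if it equals its polynomially convex hull. -/
def IsPolyConvex {n : ℕ} (K : Set (Fin n → ℂ)) : Prop := polyHull K = K

/-- The polynomially convex hull of a subset of `ℂ`. -/
def polyHull1 (F : Set ℂ) : Set ℂ :=
  {z | ∀ p : Polynomial ℂ, ‖p.eval z‖ ≤ sSup ((fun w => ‖p.eval w‖) '' F)}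

/-- A subset of `ℂ` is polynomially convex if it equals its polynomially convex hull. -/
def IsPolyConvex1 (F : Set ℂ) : Prop := polyHull1 F = F

/-- Partial derivative in the `i`-th coordinate direction. -/
def pd {n : ℕ} (i : Fin n) (f : (Fin n → ℂ) → ℂ) : (Fin n → ℂ) → ℂ :=
  fun z => fderiv ℂ f z (Pi.single i 1)

/-- Iterated partial derivative `D^ℓ = ∂^{ℓ₁+⋯+ℓₙ}/∂z₁^{ℓ₁}⋯∂zₙ^{ℓₙ}`. -/
def Dml {n : ℕ} (ℓ : Fin n → ℕ) (f : (Fin n → ℂ) → ℂ) : (Fin n → ℂ) → ℂ :=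
  (List.finRange n).foldr (fun i g => (pd i)^[ℓ i] g) f

/-- Partial sums `S_λ` of a Taylor-type series around `ζ`, with coefficients computed from a
given family `g` of (extended) partial derivatives: the coefficient of the monomial
`(z-ζ)^{N_j}` is `g (N_j) ζ / (N_{j,1}! ⋯ N_{j,n}!)`. -/
def pSumExt {n : ℕ} (Nj : ℕ → Fin n → ℕ) (g : (Fin n → ℕ) → (Fin n → ℂ) → ℂ)
    (ζ : Fin n → ℂ) (lam : ℕ) : (Fin n → ℂ) → ℂ :=
  fun z => ∑ j ∈ Finset.range (lam + 1),
    (((∏ i, Nat.factorial (Nj j i) : ℕ) : ℂ))⁻¹ * g (Nj j) ζ * ∏ i, (z i - ζ i) ^ (Nj j i)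

/-- Partial sums `S_λ(f,ζ)` of the Taylor development of `f` around `ζ`. -/
def pSum {n : ℕ} (Nj : ℕ → Fin n → ℕ) (f : (Fin n → ℂ) → ℂ)
    (ζ : Fin n → ℂ) (lam : ℕ) : (Fin n → ℂ) → ℂ :=
  pSumExt Nj (fun ℓ => Dml ℓ f) ζ lam

/-- The space `O(Ω)` of holomorphic functions on `Ω`. -/
def Ospace (n : ℕ) (Ω : Set (Fin n → ℂ)) : Type :=
  {f : (Fin n → ℂ) → ℂ // DifferentiableOn ℂ f Ω}

/-- Topology of uniform convergence on compact subsets of `Ω` on `O(Ω)` (the compact-open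
topology induced via restriction to `Ω`). -/
instance (n : ℕ) (Ω : Set (Fin n → ℂ)) : TopologicalSpace (Ospace n Ω) :=
  TopologicalSpace.induced
    (fun f : Ospace n Ω =>
      (⟨Ω.restrict f.1, continuousOn_iff_continuous_restrict.mp f.2.continuousOn⟩ : C(Ω, ℂ)))
    inferInstance

/-- Membership in `A^∞(Ω)`: `f` is holomorphic on `Ω` and each partial derivative `D^ℓ f`
extends continuously to the closure of `Ω`. -/
def AinfMem (n : ℕ) (Ω : Set (Fin n → ℂ)) (f : (Fin n → ℂ) → ℂ) : Prop :=
  DifferentiableOn ℂ f Ω ∧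
    ∀ ℓ : Fin n → ℕ, ∃ g : (Fin n → ℂ) → ℂ,
      ContinuousOn g (closure Ω) ∧ Set.EqOn g (Dml ℓ f) Ω

/-- The space `A^∞(Ω)`. -/
def AinfSpace (n : ℕ) (Ω : Set (Fin n → ℂ)) : Type :=
  {f : (Fin n → ℂ) → ℂ // AinfMem n Ω f}

/-- The chosen continuous extension of `D^ℓ f` to the closure of `Ω`, for `f ∈ A^∞(Ω)`.
(Its restriction to the closure of `Ω` is uniquely determined.) -/
def AinfExt {n : ℕ} {Ω : Set (Fin n → ℂ)} (f : AinfSpace n Ω) (ℓ : Fin n → ℕ) :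
    (Fin n → ℂ) → ℂ :=
  Classical.choose (f.2.2 ℓ)

lemma AinfExt_continuousOn {n : ℕ} {Ω : Set (Fin n → ℂ)} (f : AinfSpace n Ω) (ℓ : Fin n → ℕ) :
    ContinuousOn (AinfExt f ℓ) (closure Ω) :=
  (Classical.choose_spec (f.2.2 ℓ)).1

lemma AinfExt_eqOn {n : ℕ} {Ω : Set (Fin n → ℂ)} (f : AinfSpace n Ω) (ℓ : Fin n → ℕ) :
    Set.EqOn (AinfExt f ℓ) (Dml ℓ f.1) Ω :=
  (Classical.choose_spec (f.2.2 ℓ)).2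

/-- Topology on `A^∞(Ω)`: uniform convergence of every partial derivative on every compact
subset of the closure of `Ω`. -/
instance (n : ℕ) (Ω : Set (Fin n → ℂ)) : TopologicalSpace (AinfSpace n Ω) :=
  TopologicalSpace.induced
    (fun f : AinfSpace n Ω => fun ℓ : Fin n → ℕ =>
      (⟨(closure Ω).restrict (AinfExt f ℓ),
        continuousOn_iff_continuous_restrict.mp (AinfExt_continuousOn f ℓ)⟩ :
          C(closure Ω, ℂ)))
    inferInstance

/-- A smooth compact curve in `ℂⁿ`: the image of an injective `C^∞` map with
nowhere-vanishing derivative, defined on a compact interval (an arc) or on the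
circle (a closed curve, modelled by a 1-periodic map). -/
def IsSmoothCompactCurve {n : ℕ} (K : Set (Fin n → ℂ)) : Prop :=
  ∃ γ : ℝ → (Fin n → ℂ), ContDiff ℝ (⊤ : ℕ∞) γ ∧ (∀ t, deriv γ t ≠ 0) ∧ K = γ '' Set.Icc 0 1 ∧
    (Set.InjOn γ (Set.Icc 0 1) ∨ (Function.Periodic γ 1 ∧ Set.InjOn γ (Set.Ico 0 1)))

/-- A disjoint union of finitely many smooth compact curves. -/
def IsFiniteUnionOfSmoothCurves {n : ℕ} (K : Set (Fin n → ℂ)) : Prop :=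
  ∃ (m : ℕ) (C : Fin m → Set (Fin n → ℂ)),
    (∀ i, IsSmoothCompactCurve (C i)) ∧ Pairwise (Function.onFun Disjoint C) ∧ K = ⋃ i, C i



/-- boundary of a component of the complement of a closed set lies in the set -/
lemma frontier_comp_subset {K : Set ℂ} (hK : IsClosed K) (a : ℂ) :
    frontier (connectedComponentIn Kᶜ a) ⊆ K := by
  intro x hx
  by_contra hxK
  have hxo : IsOpen (connectedComponentIn Kᶜ x) := hK.isOpen_compl.connectedComponentIn
  have hao : IsOpen (connectedComponentIn Kᶜ a) := hK.isOpen_compl.connectedComponentIn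
  have hxm : x ∈ connectedComponentIn Kᶜ x := mem_connectedComponentIn hxK
  obtain ⟨y, hy1, hy2⟩ := mem_closure_iff.1 (frontier_subset_closure hx) _ hxo hxm
  have e1 := connectedComponentIn_eq hy1
  have e2 := connectedComponentIn_eq hy2
  rw [e1, ← e2] at hxm
  rw [hao.frontier_eq] at hx
  exact hx.2 hxm

lemma log_step {X : Set ℂ} {b b' : ℂ} (h : ∀ z ∈ X, ‖b' - b‖ < ‖z - b‖)
    (hb : ∃ g : ℂ → ℂ, ContinuousOn g X ∧ ∀ z ∈ X, Complex.exp (g z) = z - b) :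
    ∃ g : ℂ → ℂ, ContinuousOn g X ∧ ∀ z ∈ X, Complex.exp (g z) = z - b' := by
  obtain ⟨g, hg, hge⟩ := hb
  have hne : ∀ z ∈ X, z - b ≠ 0 := fun z hz h0 => by
    have := h z hz
    rw [h0, norm_zero] at this
    exact absurd this (not_lt.2 (norm_nonneg _))
  have hsl : ∀ z ∈ X, 1 + (-(b' - b) / (z - b)) ∈ Complex.slitPlane := fun z hz => by
    apply Complex.mem_slitPlane_of_norm_lt_one
    rw [norm_div, norm_neg, div_lt_one (norm_pos_iff.2 (hne z hz))]
    exact h z hz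
  refine ⟨fun z => g z + Complex.log (1 + (-(b' - b) / (z - b))), ?_, fun z hz => ?_⟩
  · refine hg.add (ContinuousOn.clog ?_ hsl)
    exact continuousOn_const.add (continuousOn_const.div (by fun_prop) hne)
  · rw [Complex.exp_add, hge z hz, Complex.exp_log (Complex.slitPlane_ne_zero (hsl z hz))]
    have := hne z hz
    field_simp
    ring

lemma log_far {X : Set ℂ} {R : ℝ} (hR : ∀ z ∈ X, ‖z‖ < R) {b : ℂ} (hb : R ≤ ‖b‖) (h0 : b ≠ 0) :
    ∃ g : ℂ → ℂ, ContinuousOn g X ∧ ∀ z ∈ X, Complex.exp (g z) = z - b := by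
  have hsl : ∀ z ∈ X, 1 + (-(z / b)) ∈ Complex.slitPlane := fun z hz => by
    apply Complex.mem_slitPlane_of_norm_lt_one
    rw [norm_neg, norm_div, div_lt_one (norm_pos_iff.2 h0)]
    exact (hR z hz).trans_le hb
  refine ⟨fun z => Complex.log (-b) + Complex.log (1 + (-(z / b))), ?_, fun z hz => ?_⟩
  · refine continuousOn_const.add (ContinuousOn.clog ?_ hsl)
    fun_prop
  · rw [Complex.exp_add, Complex.exp_log (Complex.slitPlane_ne_zero (hsl z hz)),
      Complex.exp_log (neg_ne_zero.2 h0)]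
    field_simp
    ring

lemma log_of_unbounded {X : Set ℂ} (hX : IsCompact X) {a : ℂ}
    (ha : a ∉ X) (hub : ¬ Bornology.IsBounded (connectedComponentIn Xᶜ a)) :
    ∃ g : ℂ → ℂ, ContinuousOn g X ∧ ∀ z ∈ X, Complex.exp (g z) = z - a := by
  classical
  obtain ⟨R, hR⟩ := hX.isBounded.subset_ball 0
  have hR' : ∀ z ∈ X, ‖z‖ < max R 1 := fun z hz => by
    have := hR hz
    rw [mem_ball_zero_iff] at this
    exact this.trans_le (le_max_left _ _)
  obtain ⟨c, hc, hcR⟩ : ∃ c ∈ connectedComponentIn Xᶜ a, max R 1 ≤ ‖c‖ := by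
    by_contra! hcon
    apply hub
    exact (Metric.isBounded_ball (x := (0:ℂ)) (r := max R 1)).subset
      (fun x hx => by simpa using hcon x hx)
  let Q : ℂ → Prop := fun b => ∃ g : ℂ → ℂ, ContinuousOn g X ∧ ∀ z ∈ X, Complex.exp (g z) = z - b
  have hQc : Q c := log_far hR' hcR (norm_pos_iff.1 (lt_of_lt_of_le one_pos ((le_max_right _ _).trans hcR)))
  have key : decide (Q a) = decide (Q c) := by
    apply isPreconnected_connectedComponentIn.constant (s := connectedComponentIn Xᶜ a)
      (f := fun b => decide (Q b)) ?_ (mem_connectedComponentIn ha) hc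
    intro b hb
    have hbX : b ∉ X := connectedComponentIn_subset _ _ hb
    obtain ⟨ε, hε, hball⟩ := Metric.isOpen_iff.1 hX.isClosed.isOpen_compl b hbX
    apply ContinuousAt.continuousWithinAt
    refine (continuousAt_const (y := decide (Q b))).congr ?_
    filter_upwards [Metric.ball_mem_nhds b (half_pos hε)] with b' hb'
    have hfar : ∀ z ∈ X, ε ≤ ‖z - b‖ := fun z hz => by
      by_contra! hlt
      exact hball (by simpa [dist_eq_norm] using hlt) hz
    rw [Metric.mem_ball, dist_eq_norm] at hb'
    have : Q b ↔ Q b' := by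
      constructor
      · exact log_step fun z hz => by linarith [hfar z hz]
      · apply log_step
        intro z hz
        have := norm_sub_le_norm_sub_add_norm_sub z b' b
        rw [norm_sub_rev b b']
        linarith [hfar z hz]
    simp [this]
  have : Q a := by simpa [hQc] using key
  exact this

lemma no_log_circle {L : ℂ → ℂ} {a : ℂ} {R : ℝ} (hR : 0 < R) (hL : Continuous L)
    (h : ∀ z, ‖z - a‖ = R → Complex.exp (L z) = z - a) : False := by
  let γ : ℝ → ℂ := fun θ => a + R * Complex.exp (θ * Complex.I)
  have hγ : Continuous γ := by fun_prop
  have h1 : ∀ θ, Complex.exp (L (γ θ) - θ * Complex.I) = R := fun θ => by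
    rw [Complex.exp_sub, h]
    · simp [γ]
    · simp [γ, Complex.norm_exp, abs_of_pos hR]
  let f : ℝ → ℝ := fun θ => ((L (γ θ) - θ * Complex.I - (L (γ 0))).im) / (2 * Real.pi)
  have hf : Continuous f := by fun_prop
  have hint : ∀ θ, ∃ n : ℤ, f θ = n := fun θ => by
    have e : Complex.exp (L (γ θ) - θ * Complex.I) = Complex.exp (L (γ 0)) := by
      rw [h1, ← h1 0]; simp
    obtain ⟨n, hn⟩ := Complex.exp_eq_exp_iff_exists_int.1 e
    refine ⟨n, ?_⟩
    simp only [f, hn]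
    have : Real.pi ≠ 0 := Real.pi_ne_zero
    simp
  choose n hn using hint
  have hnc : Continuous n := by
    have : (fun θ => ((n θ : ℤ) : ℝ)) = f := by ext θ; rw [hn]
    rw [← this] at hf
    exact (Int.isClosedEmbedding_coe_real.isEmbedding.continuous_iff).2 hf
  have := PreconnectedSpace.constant (α := ℝ) inferInstance hnc (x := 0) (y := 2 * Real.pi)
  have e0 := hn 0
  have e1 := hn (2 * Real.pi)
  rw [← this, ← e0] at e1
  have hγ2 : γ (2 * Real.pi) = γ 0 := by simp [γ, Complex.exp_two_pi_mul_I]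
  simp only [f, hγ2] at e1
  have : Real.pi ≠ 0 := Real.pi_ne_zero
  simp [this] at e1

lemma unbounded_of_log {K : Set ℂ} (hK : IsCompact K) {a : ℂ} (ha : a ∉ K)
    (hlog : ∃ g : ℂ → ℂ, ContinuousOn g K ∧ ∀ z ∈ K, Complex.exp (g z) = z - a) :
    ¬ Bornology.IsBounded (connectedComponentIn Kᶜ a) := by
  classical
  intro hb
  set W := connectedComponentIn Kᶜ a with hW
  obtain ⟨g, hg, hge⟩ := hlog
  obtain ⟨G, hG⟩ := ContinuousMap.exists_restrict_eq (Y := ℂ) hK.isClosed ⟨K.domRestrict g, hg.domRestrict⟩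
  have hGK : ∀ z ∈ K, G z = g z := fun z hz => congrArg (fun f : C(K, ℂ) => f ⟨z, hz⟩) hG
  have haW : a ∈ W := mem_connectedComponentIn ha
  let N : ℂ → ℂ := W.piecewise (fun z => Complex.exp (G z)) (fun z => z - a)
  have hN : Continuous N := by
    refine Continuous.piecewise ?_ (by fun_prop) (by fun_prop)
    intro x hx
    have := frontier_comp_subset hK.isClosed a hx
    rw [hGK x this, hge x this]
  have hN0 : ∀ z, N z ≠ 0 := fun z => by
    by_cases hz : z ∈ W
    · simp [N, hz]
    · simp only [N, hz, not_false_eq_true, piecewise_eq_of_notMem]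
      intro h0
      exact hz (by rwa [sub_eq_zero.1 h0])
  obtain ⟨L, ⟨-, hL⟩, -⟩ := Complex.isCoveringMap_exp.existsUnique_continuousMap_lifts
    (⟨fun z => ⟨N z, hN0 z⟩, by fun_prop⟩ : C(ℂ, {z : ℂ // z ≠ 0})) a (Complex.log (N a))
    (by ext; simp [Complex.exp_log (hN0 a)])
  have hL' : ∀ z, Complex.exp (L z) = N z := fun z => by
    have := congrFun hL z
    exact congrArg Subtype.val this
  obtain ⟨R, hR⟩ := hb.subset_ball a
  refine no_log_circle (a := a) (R := max R 1) (by positivity) L.continuous ?_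
  intro z hz
  rw [hL']
  have : z ∉ W := fun hzW => by
    have := hR hzW
    rw [Metric.mem_ball, dist_eq_norm, hz] at this
    exact absurd this (not_lt.2 (le_max_left _ _))
  simp [N, this]

lemma unbounded_union {X Y : Set ℂ} (hX : IsCompact X) (hY : IsCompact Y) (hd : Disjoint X Y)
    {a : ℂ} (haX : a ∉ X) (haY : a ∉ Y)
    (h1 : ¬ Bornology.IsBounded (connectedComponentIn Xᶜ a))
    (h2 : ¬ Bornology.IsBounded (connectedComponentIn Yᶜ a)) :
    ¬ Bornology.IsBounded (connectedComponentIn (X ∪ Y)ᶜ a) := by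
  classical
  obtain ⟨g, hg, hge⟩ := log_of_unbounded hX haX h1
  obtain ⟨k, hk, hke⟩ := log_of_unbounded hY haY h2
  refine unbounded_of_log (hX.union hY) (by simp [haX, haY]) ⟨X.piecewise g k, ?_, ?_⟩
  · have hY' : ∀ z ∈ Y, z ∉ X := fun z hz hz' => hd.le_bot ⟨hz', hz⟩
    refine ContinuousOn.union_of_isClosed ?_ ?_ hX.isClosed hY.isClosed
    · exact hg.congr fun z hz => by simp [hz]
    · exact hk.congr fun z hz => by simp [hY' z hz]
  · intro z hz
    by_cases hzX : z ∈ X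
    · simp [hzX, hge]
    · simp [hzX, hke z (hz.resolve_left hzX)]

/-- `2 i` times the `∂̄`-derivative. -/
def dbar (φ : ℂ → ℂ) (w : ℂ) : ℂ :=
  Complex.I * fderiv ℝ φ w 1 - fderiv ℝ φ w Complex.I

lemma dbar_continuous {φ : ℂ → ℂ} (hφ : ContDiff ℝ 1 φ) : Continuous (dbar φ) := by
  have := hφ.continuous_fderiv one_ne_zero
  unfold dbar
  fun_prop

lemma dbar_eq_zero {φ : ℂ → ℂ} {z c : ℂ} (h : ∀ᶠ w in 𝓝 z, φ w = c) : dbar φ z = 0 := by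
  have : fderiv ℝ φ z = 0 := by
    have h' : φ =ᶠ[𝓝 z] fun _ => c := h
    rw [h'.fderiv_eq]; simp
  simp [dbar, this]

lemma side_integral {T : ℝ} (hT : 0 < T) :
    ∫ x : ℝ in (-T)..T, 2 * T / (x ^ 2 + T ^ 2) = Real.pi := by
  have h1 : ∀ x : ℝ, 2 * T / (x ^ 2 + T ^ 2) = (2 / T) * (1 / (1 + (x / T) ^ 2)) := fun x => by
    have : x ^ 2 + T ^ 2 ≠ 0 := by positivity
    have : 1 + (x / T) ^ 2 ≠ 0 := by positivity
    field_simp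
    ring
  simp_rw [h1]
  rw [intervalIntegral.integral_const_mul,
    intervalIntegral.integral_comp_div (fun x => 1 / (1 + x ^ 2)) hT.ne',
    integral_one_div_one_add_sq, neg_div, div_self hT.ne', Real.arctan_neg, Real.arctan_one]
  simp only [smul_eq_mul]
  field_simp
  ring

lemma boundary_integral {T : ℝ} (hT : 0 < T) :
    (∫ x : ℝ in (-T)..T, ((x : ℂ) + ((-T : ℝ) : ℂ) * Complex.I)⁻¹) -
      (∫ x : ℝ in (-T)..T, ((x : ℂ) + ((T : ℝ) : ℂ) * Complex.I)⁻¹) +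
      Complex.I * (∫ y : ℝ in (-T)..T, (((T : ℝ) : ℂ) + y * Complex.I)⁻¹) -
      Complex.I * (∫ y : ℝ in (-T)..T, (((-T : ℝ) : ℂ) + y * Complex.I)⁻¹) =
      2 * Real.pi * Complex.I := by
  have n1 : ∀ (c : ℝ), c ≠ 0 → ∀ x : ℝ, (x : ℂ) + (c : ℂ) * Complex.I ≠ 0 := fun c hc x h => by
    have := congrArg Complex.im h
    simp at this
    exact hc this
  have n2 : ∀ (c : ℝ), c ≠ 0 → ∀ x : ℝ, (c : ℂ) + (x : ℂ) * Complex.I ≠ 0 := fun c hc x h => by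
    have := congrArg Complex.re h
    simp at this
    exact hc this
  have i1 : ∀ (c : ℝ), c ≠ 0 → IntervalIntegrable
      (fun x : ℝ => ((x : ℂ) + (c : ℂ) * Complex.I)⁻¹) MeasureTheory.volume (-T) T := fun c hc =>
    (Continuous.inv₀ (by fun_prop) (n1 c hc)).intervalIntegrable _ _
  have i2 : ∀ (c : ℝ), c ≠ 0 → IntervalIntegrable
      (fun x : ℝ => ((c : ℂ) + (x : ℂ) * Complex.I)⁻¹) MeasureTheory.volume (-T) T := fun c hc =>
    (Continuous.inv₀ (by fun_prop) (n2 c hc)).intervalIntegrable _ _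
  have hT' : -T ≠ 0 := neg_ne_zero.2 hT.ne'
  rw [← intervalIntegral.integral_sub (i1 _ hT') (i1 _ hT.ne'), add_sub_assoc, ← mul_sub,
    ← intervalIntegral.integral_sub (i2 _ hT.ne') (i2 _ hT')]
  have hq : ∀ x : ℝ, (x : ℂ) ^ 2 + (T : ℂ) ^ 2 ≠ 0 := fun x => by
    have : x ^ 2 + T ^ 2 ≠ 0 := by positivity
    exact_mod_cast this
  have e1 : ∀ x : ℝ, ((x : ℂ) + ((-T : ℝ) : ℂ) * Complex.I)⁻¹ - ((x : ℂ) + (T : ℂ) * Complex.I)⁻¹ =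
      Complex.I * ((2 * T / (x ^ 2 + T ^ 2) : ℝ) : ℂ) := fun x => by
    rw [inv_sub_inv (n1 _ hT' x) (n1 _ hT.ne' x)]
    have : ((x : ℂ) + ((-T : ℝ) : ℂ) * Complex.I) * ((x : ℂ) + (T : ℂ) * Complex.I) = x ^ 2 + T ^ 2 := by
      push_cast
      linear_combination (-(T : ℂ) ^ 2) * Complex.I_sq
    rw [this]
    push_cast
    have := hq x
    field_simp
    ring
  have e2 : ∀ x : ℝ, ((T : ℂ) + x * Complex.I)⁻¹ - (((-T : ℝ) : ℂ) + x * Complex.I)⁻¹ =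
      ((2 * T / (x ^ 2 + T ^ 2) : ℝ) : ℂ) := fun x => by
    rw [inv_sub_inv (n2 _ hT.ne' x) (n2 _ hT' x)]
    have : ((T : ℂ) + x * Complex.I) * (((-T : ℝ) : ℂ) + x * Complex.I) = -(x ^ 2 + T ^ 2) := by
      push_cast
      linear_combination ((x : ℂ) ^ 2) * Complex.I_sq
    rw [this]
    push_cast
    have := hq x
    field_simp
    ring
  simp_rw [e1, e2]
  rw [intervalIntegral.integral_const_mul, intervalIntegral.integral_ofReal, side_integral hT]
  ring

lemma inv_mul_continuous {g : ℂ → ℂ} (hg : Continuous g) {z : ℂ} (h0 : ∀ᶠ w in 𝓝 z, g w = 0) :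
    Continuous fun w => (w - z)⁻¹ * g w := by
  rw [continuous_iff_continuousAt]
  intro w
  by_cases hw : w = z
  · subst hw
    refine (continuousAt_const (y := (0 : ℂ))).congr ?_
    filter_upwards [h0] with u hu
    simp [hu]
  · exact ContinuousAt.mul (ContinuousAt.inv₀ (by fun_prop) (sub_ne_zero.2 hw)) hg.continuousAt

lemma pompeiu_zero {φ : ℂ → ℂ} (hφ : ContDiff ℝ 1 φ) {T : ℝ} (hT : 0 < T)
    (hs : ∀ w : ℂ, T ≤ |w.re| ∨ T ≤ |w.im| → φ w = 0) (h0 : ∀ᶠ w in 𝓝 (0 : ℂ), φ w = φ 0) :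
    ∫ x : ℝ in (-T)..T, ∫ y : ℝ in (-T)..T,
      ((x : ℂ) + y * Complex.I)⁻¹ * dbar φ (x + y * Complex.I) =
      -(2 * Real.pi * Complex.I * φ 0) := by
  have hd0 : ∀ᶠ w in 𝓝 (0 : ℂ), dbar φ w = 0 := by
    filter_upwards [h0.eventually_nhds] with w hw
    exact dbar_eq_zero hw
  have hcont := inv_mul_continuous (dbar_continuous hφ) hd0
  simp only [sub_zero] at hcont
  have hFc := inv_mul_continuous (g := fun w => φ w - φ 0) (z := 0)
    (hφ.continuous.sub continuous_const) (by filter_upwards [h0] with w hw; simp [hw])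
  simp only [sub_zero] at hFc
  let f' : ℂ → ℂ →L[ℝ] ℂ := fun w =>
    w⁻¹ • fderiv ℝ φ w + (φ w - φ 0) • ((-(w ^ 2)⁻¹) • (1 : ℂ →L[ℝ] ℂ))
  have hf'e : ∀ w, Complex.I • f' w 1 - f' w Complex.I = w⁻¹ * dbar φ w := fun w => by
    simp [f', dbar]
    ring
  have key := Complex.integral_boundary_rect_of_hasFDerivAt_real_off_countable
    (fun w => w⁻¹ * (φ w - φ 0)) f' (-T + (-T : ℝ) * Complex.I : ℂ) (T + T * Complex.I : ℂ) {0}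
    (countable_singleton 0) hFc.continuousOn (by
      rintro x ⟨-, hx⟩
      have hx0 : x ≠ 0 := hx
      have h1 : HasFDerivAt φ (fderiv ℝ φ x) x :=
        (hφ.differentiable one_ne_zero x).hasFDerivAt
      have h2 : HasFDerivAt (fun w : ℂ => w⁻¹) ((-(x ^ 2)⁻¹) • (1 : ℂ →L[ℝ] ℂ)) x := by
        have := (hasDerivAt_inv hx0).hasFDerivAt.restrictScalars ℝ
        exact this.congr_fderiv (by ext <;> simp [mul_comm])
      have := h2.mul (h1.sub_const (φ 0))
      exact this) (by
      simp_rw [hf'e]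
      exact hcont.continuousOn.integrableOn_compact (isCompact_uIcc.reProdIm isCompact_uIcc))
  simp_rw [hf'e] at key
  simp only [Complex.add_re, Complex.neg_re, Complex.ofReal_re, Complex.mul_re, Complex.I_re,
    Complex.I_im, Complex.ofReal_im, Complex.add_im, Complex.neg_im, Complex.mul_im,
    mul_zero, mul_one, sub_zero, add_zero, zero_add, neg_zero, smul_eq_mul] at key
  rw [← key]
  have z1 : ∀ x : ℝ, φ (x + ((-T : ℝ) : ℂ) * Complex.I) = 0 := fun x => hs _ (by
    right; simp [abs_of_pos hT])
  have z2 : ∀ x : ℝ, φ (x + ((T : ℝ) : ℂ) * Complex.I) = 0 := fun x => hs _ (by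
    right; simp [abs_of_pos hT])
  have z3 : ∀ x : ℝ, φ (((-T : ℝ) : ℂ) + x * Complex.I) = 0 := fun x => hs _ (by
    left; simp [abs_of_pos hT])
  have z4 : ∀ x : ℝ, φ (((T : ℝ) : ℂ) + x * Complex.I) = 0 := fun x => hs _ (by
    left; simp [abs_of_pos hT])
  simp_rw [z1, z2, z3, z4]
  simp only [zero_sub, intervalIntegral.integral_mul_const]
  have := boundary_integral hT
  linear_combination (-φ 0) * this

lemma box_eq {h : ℝ → ℝ → ℂ} {T : ℝ}
    (hs : ∀ x y, T ≤ |x| ∨ T ≤ |y| → h x y = 0) :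
    ∫ x : ℝ in (-T)..T, ∫ y : ℝ in (-T)..T, h x y = ∫ x : ℝ, ∫ y : ℝ, h x y := by
  have aux : ∀ u : ℝ, u ∉ Ioc (-T) T → T ≤ |u| := fun u hu => by
    by_contra! hlt
    rw [abs_lt] at hlt
    exact hu ⟨hlt.1, hlt.2.le⟩
  have h1 : ∀ x, ∫ y : ℝ in (-T)..T, h x y = ∫ y : ℝ, h x y := fun x => by
    apply intervalIntegral.integral_eq_integral_of_support_subset
    intro y hy
    by_contra hc
    exact hy (hs x y (Or.inr (aux y hc)))
  simp_rw [h1]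
  apply intervalIntegral.integral_eq_integral_of_support_subset
  intro x hx
  by_contra hc
  apply hx
  simp [fun y => hs x y (Or.inl (aux x hc))]

lemma pompeiu {φ : ℂ → ℂ} (hφ : ContDiff ℝ 1 φ) {T : ℝ}
    (hs : ∀ w : ℂ, T ≤ ‖w‖ → ∀ᶠ v in 𝓝 w, φ v = 0) {z : ℂ} (hz : ∀ᶠ w in 𝓝 z, φ w = φ z) :
    ∫ x : ℝ in (-T)..T, ∫ y : ℝ in (-T)..T,
      ((x : ℂ) + y * Complex.I - z)⁻¹ * dbar φ (x + y * Complex.I) =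
      -(2 * Real.pi * Complex.I * φ z) := by
  let ψ : ℂ → ℂ := fun u => φ (u + z)
  have hψ : ContDiff ℝ 1 ψ := hφ.comp (contDiff_id.add contDiff_const)
  have hdb : ∀ u, dbar ψ u = dbar φ (u + z) := fun u => by
    simp only [dbar, ψ, fderiv_comp_add_right]
  have hre : ∀ w : ℂ, ∀ S : ℝ, S ≤ |w.re| ∨ S ≤ |w.im| → S ≤ ‖w‖ := fun w S h => by
    rcases h with h | h
    · exact h.trans (Complex.abs_re_le_norm w)
    · exact h.trans (Complex.abs_im_le_norm w)
  have hsz : ∀ w : ℂ, |T| + 1 + ‖z‖ ≤ ‖w‖ → T ≤ ‖w + z‖ := fun w h => by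
    have h1 := norm_sub_le (w + z) z
    rw [add_sub_cancel_right] at h1
    have := le_abs_self T
    linarith
  have key := pompeiu_zero hψ (T := |T| + 1 + ‖z‖) (by positivity)
    (fun w hw => (hs _ (hsz w (hre w _ hw))).self_of_nhds) (by
      have : Tendsto (fun u : ℂ => u + z) (𝓝 0) (𝓝 z) := by
        have : Continuous (fun u : ℂ => u + z) := by fun_prop
        simpa using this.tendsto 0
      filter_upwards [this.eventually hz] with u hu
      simp [ψ, hu])
  have xy : ∀ x y S : ℝ, S ≤ |x| ∨ S ≤ |y| → S ≤ ‖(x : ℂ) + y * Complex.I‖ := fun x y S h =>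
    hre _ _ (by simpa using h)
  rw [box_eq] at key
  · rw [box_eq]
    · simp only [hdb] at key
      have : ψ 0 = φ z := by simp [ψ]
      rw [this] at key
      rw [← key]
      rw [← MeasureTheory.integral_add_right_eq_self _ z.re]
      congr 1
      ext x
      rw [← MeasureTheory.integral_add_right_eq_self _ z.im]
      congr 1
      ext y
      have : ((x + z.re : ℝ) : ℂ) + ((y + z.im : ℝ) : ℂ) * Complex.I = x + y * Complex.I + z := by
        conv_rhs => rw [← Complex.re_add_im z]
        push_cast
        ring
      rw [this, add_sub_cancel_right]
    · intro x y h
      rw [dbar_eq_zero (hs _ (xy x y _ h)), mul_zero]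
  · intro x y h
    rw [hdb, dbar_eq_zero (hs _ (hsz _ (xy x y _ h))), mul_zero]

lemma approx {X Y : Set ℂ} (hX : IsCompact X) (hY : IsCompact Y) (hd : Disjoint X Y)
    (h1 : ∀ a ∉ X, ¬ Bornology.IsBounded (connectedComponentIn Xᶜ a))
    (h2 : ∀ a ∉ Y, ¬ Bornology.IsBounded (connectedComponentIn Yᶜ a))
    {ε : ℝ} (hε : 0 < ε) :
    ∃ q : Polynomial ℂ, (∀ z ∈ X, ‖q.eval z - 1‖ < ε) ∧ ∀ z ∈ Y, ‖q.eval z‖ < ε := by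
  have hK : IsCompact (X ∪ Y) := hX.union hY
  obtain ⟨T, hT⟩ := hK.isBounded.subset_ball 0
  -- the cutoff function
  obtain ⟨f, hf0, hf1, -⟩ := exists_contMDiffMap_zero_one_nhds_of_isClosed
    (n := 1) (modelWithCornersSelf ℝ ℂ) (s := Y ∪ (Metric.ball (0 : ℂ) T)ᶜ) (t := X)
    (hY.isClosed.union Metric.isOpen_ball.isClosed_compl) hX.isClosed (by
      rw [disjoint_union_left]
      refine ⟨hd.symm, ?_⟩
      rw [Set.disjoint_compl_left_iff_subset]
      exact subset_union_left.trans hT)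
  let φ : ℂ → ℂ := fun w => (f w : ℂ)
  have hφ : ContDiff ℝ 1 φ := Complex.ofRealCLM.contDiff.comp (contMDiff_iff_contDiff.1 f.contMDiff)
  rw [eventually_nhdsSet_iff_forall] at hf0 hf1
  have hφX : ∀ z ∈ X, ∀ᶠ w in 𝓝 z, φ w = 1 := fun z hz => by
    filter_upwards [hf1 z hz] with w hw
    simp [φ, hw]
  have hφY : ∀ z ∈ Y, ∀ᶠ w in 𝓝 z, φ w = 0 := fun z hz => by
    filter_upwards [hf0 z (Or.inl hz)] with w hw
    simp [φ, hw]
  have hφT : ∀ z : ℂ, T ≤ ‖z‖ → ∀ᶠ w in 𝓝 z, φ w = 0 := fun z hz => by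
    filter_upwards [hf0 z (Or.inr (by simpa using hz))] with w hw
    simp [φ, hw]
  have hφK : ∀ z ∈ X ∪ Y, ∀ᶠ w in 𝓝 z, φ w = φ z := fun z hz => by
    rcases hz with hz | hz
    · rw [(hφX z hz).self_of_nhds]; exact hφX z hz
    · rw [(hφY z hz).self_of_nhds]; exact hφY z hz
  -- the uniform algebra
  have : CompactSpace ↥(X ∪ Y) := isCompact_iff_compactSpace.1 hK
  let S : Subalgebra ℂ C(↥(X ∪ Y), ℂ) := (polynomialFunctions (X ∪ Y)).topologicalClosure
  have hS : IsClosed (S : Set C(↥(X ∪ Y), ℂ)) := Subalgebra.isClosed_topologicalClosure _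
  have : CompleteSpace S := hS.completeSpace_coe
  let Z : S := ⟨Polynomial.toContinuousMapOn Polynomial.X (X ∪ Y),
    Subalgebra.le_topologicalClosure _ (by
      rw [← SetLike.mem_coe, polynomialFunctions_coe]; exact ⟨Polynomial.X, rfl⟩)⟩
  have hZ : ∀ z : ↥(X ∪ Y), (Z : C(↥(X ∪ Y), ℂ)) z = z := fun z => by
    simp [Z]
  have hspec : spectrum ℂ (Z : C(↥(X ∪ Y), ℂ)) = X ∪ Y := by
    rw [ContinuousMap.spectrum_eq_range]
    ext w
    constructor
    · rintro ⟨z, rfl⟩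
      rw [hZ]; exact z.2
    · intro hw
      exact ⟨⟨w, hw⟩, hZ _⟩
  have hres : ∀ w ∉ X ∪ Y, w ∈ resolventSet ℂ Z := fun w hw => by
    by_contra hc
    have hw' : w ∈ spectrum ℂ Z := hc
    have := Subalgebra.spectrum_isBounded_connectedComponentIn S Z hw'
    rw [hspec] at this
    have hw2 : w ∉ X ∧ w ∉ Y := by simpa using hw
    exact unbounded_union hX hY hd hw2.1 hw2.2 (h1 w hw2.1) (h2 w hw2.2) this
  let ev : ↥(X ∪ Y) → (S →L[ℂ] ℂ) := fun z =>
    (ContinuousMap.evalCLM ℂ z).comp S.toSubmodule.subtypeL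
  have hev : ∀ z (s : S), ev z s = (s : C(↥(X ∪ Y), ℂ)) z := fun z s => rfl
  have hevr : ∀ z, ∀ w ∉ X ∪ Y, ev z (resolvent Z w) = (w - z)⁻¹ := fun z w hw => by
    have hu := hres w hw
    have hm : (algebraMap ℂ S w - Z) * resolvent Z w = 1 := by
      unfold resolvent
      exact Ring.mul_inverse_cancel _ hu
    have hm2 := congrArg (fun s : S => (s : C(↥(X ∪ Y), ℂ)) z) hm
    have hm3 : (w - z) * ev z (resolvent Z w) = 1 := by
      rw [hev]
      have e : ((algebraMap ℂ S w - Z : S) : C(↥(X ∪ Y), ℂ)) z = w - z := by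
        rw [← hZ z]; simp
      rw [← e]
      exact hm2
    exact eq_inv_of_mul_eq_one_right hm3
  let G : ℂ → S := fun w => dbar φ w • resolvent Z w
  have hGc : Continuous G := by
    rw [continuous_iff_continuousAt]
    intro w
    by_cases hw : w ∈ X ∪ Y
    · refine (continuousAt_const (y := (0 : S))).congr ?_
      filter_upwards [(hφK w hw).eventually_nhds] with u hu
      simp [G, dbar_eq_zero hu]
    · exact (dbar_continuous hφ).continuousAt.smul
        (spectrum.hasDerivAt_resolvent_const_left (hres w hw)).continuousAt
  have hevG : ∀ z : ↥(X ∪ Y), ∀ w, ev z (G w) = (w - z)⁻¹ * dbar φ w := fun z w => by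
    by_cases hw : w ∈ X ∪ Y
    · simp [G, dbar_eq_zero (hφK w hw)]
    · simp only [G, map_smul, hevr z w hw, smul_eq_mul, mul_comm]
  have hGin : Continuous fun x : ℝ => ∫ y : ℝ in (-T)..T, G (x + y * Complex.I) := by
    apply intervalIntegral.continuous_parametric_intervalIntegral_of_continuous'
    fun_prop
  let J : S := ∫ x : ℝ in (-T)..T, ∫ y : ℝ in (-T)..T, G (x + y * Complex.I)
  have hJ : ∀ z : ↥(X ∪ Y), ev z J = -(2 * Real.pi * Complex.I * φ z) := fun z => by
    rw [← pompeiu hφ hφT (hφK z z.2)]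
    simp only [J]
    rw [← ContinuousLinearMap.intervalIntegral_comp_comm _ (hGin.intervalIntegrable _ _)]
    congr 1
    ext x
    rw [← ContinuousLinearMap.intervalIntegral_comp_comm _
      (Continuous.intervalIntegrable (by fun_prop) _ _)]
    simp_rw [hevG]
  let J' : S := (-(2 * Real.pi * Complex.I)⁻¹) • J
  have hJ' : ∀ z : ↥(X ∪ Y), (J' : C(↥(X ∪ Y), ℂ)) z = φ z := fun z => by
    rw [← hev, map_smul, hJ]
    have := Complex.two_pi_I_ne_zero
    rw [smul_eq_mul, neg_mul_neg, inv_mul_cancel_left₀ this]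
  have hmem : (J' : C(↥(X ∪ Y), ℂ)) ∈ closure (polynomialFunctions (X ∪ Y) : Set C(↥(X ∪ Y), ℂ)) := by
    rw [← Subalgebra.topologicalClosure_coe]; exact J'.2
  obtain ⟨p, hp, hdist⟩ := Metric.mem_closure_iff.1 hmem ε hε
  rw [polynomialFunctions_coe] at hp
  obtain ⟨q, rfl⟩ := hp
  have hfin : ∀ z ∈ X ∪ Y, ‖q.eval z - φ z‖ < ε := fun z hz => by
    have h := (ContinuousMap.dist_apply_le_dist (⟨z, hz⟩ : ↥(X ∪ Y))).trans_lt hdist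
    rw [hJ', dist_comm, dist_eq_norm] at h
    simpa using h
  refine ⟨q, fun z hz => ?_, fun z hz => ?_⟩
  · have := hfin z (Or.inl hz)
    rwa [(hφX z hz).self_of_nhds] at this
  · have := hfin z (Or.inr hz)
    rwa [(hφY z hz).self_of_nhds, sub_zero] at this

lemma norm_le_sSup {E : Type*} [TopologicalSpace E] {K : Set E} (hK : IsCompact K) {f : E → ℂ}
    (hf : Continuous f) {w : E} (hw : w ∈ K) : ‖f w‖ ≤ sSup ((fun w => ‖f w‖) '' K) :=
  le_csSup (hK.image hf.norm).bddAbove (mem_image_of_mem _ hw)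

lemma mvEval_continuous {n : ℕ} (p : MvPolynomial (Fin n) ℂ) : Continuous (mvEval p) :=
  MvPolynomial.continuous_eval p

lemma subset_polyHull1 {A : Set ℂ} (hA : IsCompact A) : A ⊆ polyHull1 A :=
  fun _ hz p => norm_le_sSup hA p.continuous hz

lemma polyHull1_isCompact {A : Set ℂ} : IsCompact (polyHull1 A) := by
  have hc : IsClosed (polyHull1 A) := by
    have : polyHull1 A = ⋂ p : Polynomial ℂ,
        {z | ‖p.eval z‖ ≤ sSup ((fun w => ‖p.eval w‖) '' A)} := by
      ext z; simp [polyHull1]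
    rw [this]
    exact isClosed_iInter fun p => isClosed_le p.continuous.norm continuous_const
  refine Metric.isCompact_of_isClosed_isBounded hc ?_
  refine (Metric.isBounded_closedBall (x := (0 : ℂ))
    (r := sSup ((fun w => ‖(Polynomial.X : Polynomial ℂ).eval w‖) '' A))).subset fun z hz => ?_
  have := hz Polynomial.X
  rw [mem_closedBall_zero_iff]
  simpa using this

lemma polyHull1_unbounded {A : Set ℂ} {a : ℂ} (ha : a ∉ polyHull1 A) :
    ¬ Bornology.IsBounded (connectedComponentIn (polyHull1 A)ᶜ a) := by
  intro hb
  apply ha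
  intro p
  refine Complex.norm_le_of_forall_mem_frontier_norm_le hb p.differentiable.diffContOnCl
    (fun z hz => ?_) (subset_closure (mem_connectedComponentIn ha))
  exact frontier_comp_subset polyHull1_isCompact.isClosed a hz p

lemma mvEval_aeval {n : ℕ} (p : MvPolynomial (Fin n) ℂ) (q : Polynomial ℂ) (w : Fin n → ℂ) :
    mvEval (Polynomial.aeval p q) w = q.eval (mvEval p w) := by
  unfold mvEval
  rw [Polynomial.aeval_def, Polynomial.hom_eval₂, Polynomial.eval]
  congr 1
  ext x
  simp [MvPolynomial.algebraMap_eq]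

lemma exists_sep {n : ℕ} {K : Set (Fin n → ℂ)} (hK : IsCompact K) {z : Fin n → ℂ}
    (hz : z ∉ polyHull K) :
    ∃ F : MvPolynomial (Fin n) ℂ, mvEval F z = 1 ∧ ∀ w ∈ K, ‖mvEval F w‖ ≤ 1 / 4 := by
  simp only [polyHull, mem_setOf_eq, not_forall, not_le] at hz
  obtain ⟨f, hf⟩ := hz
  set s := sSup ((fun w => ‖mvEval f w‖) '' K) with hs
  have hs0 : 0 ≤ s := Real.sSup_nonneg (by rintro _ ⟨w, -, rfl⟩; positivity)
  have hpos : 0 < ‖mvEval f z‖ := hs0.trans_lt hf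
  have hne : mvEval f z ≠ 0 := norm_pos_iff.1 hpos
  obtain ⟨N, hN⟩ := exists_pow_lt_of_lt_one (show (0 : ℝ) < 1 / 4 by norm_num)
    ((div_lt_one hpos).2 hf)
  refine ⟨(MvPolynomial.C (mvEval f z)⁻¹ * f) ^ N, ?_, fun w hw => ?_⟩
  · have : MvPolynomial.eval z f ≠ 0 := hne
    simp [mvEval, this]
  · have h1 : ‖mvEval f w‖ ≤ s := norm_le_sSup hK (mvEval_continuous f) hw
    have h2 : ‖mvEval ((MvPolynomial.C (mvEval f z)⁻¹ * f) ^ N) w‖ =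
        (‖mvEval f w‖ / ‖mvEval f z‖) ^ N := by
      simp [mvEval, div_eq_inv_mul]
    rw [h2]
    refine le_trans ?_ hN.le
    gcongr

lemma exists_bound {n : ℕ} {K : Set (Fin n → ℂ)} (hK : IsCompact K) (F : MvPolynomial (Fin n) ℂ) :
    ∃ M : ℝ, 0 < M ∧ ∀ w ∈ K, ‖mvEval F w‖ ≤ M := by
  obtain ⟨C, hC⟩ := hK.exists_bound_of_continuousOn (mvEval_continuous F).continuousOn
  exact ⟨max C 1, by positivity, fun w hw => (hC w hw).trans (le_max_left _ _)⟩

lemma polyHull_mono {n : ℕ} {K L : Set (Fin n → ℂ)} (hL : IsCompact L) (h : K ⊆ L) :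
    polyHull K ⊆ polyHull L := by
  intro z hz p
  rcases K.eq_empty_or_nonempty with rfl | hne
  · have := hz 1
    norm_num [mvEval] at this
  · exact (hz p).trans (csSup_le_csSup (hL.image (mvEval_continuous p).norm).bddAbove
      (hne.image _) (image_mono h))

/-- if the hulls of `p(K₁)` and `p(K₂)` are disjoint then the hull of the
union is the union of the hulls. -/
theorem polyHull_union_eq (n : ℕ) (K₁ K₂ : Set (Fin n → ℂ))
    (hK₁ : IsCompact K₁) (hK₂ : IsCompact K₂)
    (p : MvPolynomial (Fin n) ℂ)
    (hdisj : Disjoint (polyHull1 (mvEval p '' K₁)) (polyHull1 (mvEval p '' K₂))) :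
    polyHull (K₁ ∪ K₂) = polyHull K₁ ∪ polyHull K₂ := by
  have hK := hK₁.union hK₂
  apply Subset.antisymm
  · intro z hz
    by_contra hcon
    rw [mem_union, not_or] at hcon
    obtain ⟨F₁, hF₁z, hF₁⟩ := exists_sep hK₁ hcon.1
    obtain ⟨F₂, hF₂z, hF₂⟩ := exists_sep hK₂ hcon.2
    obtain ⟨M₁, hM₁0, hM₁⟩ := exists_bound hK F₁
    obtain ⟨M₂, hM₂0, hM₂⟩ := exists_bound hK F₂
    obtain ⟨q, hq1, hq2⟩ := approx (ε := min 1 (1 / (4 * (M₁ + M₂)))) polyHull1_isCompact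
      polyHull1_isCompact hdisj
      (fun a ha => polyHull1_unbounded ha) (fun a ha => polyHull1_unbounded ha) (by positivity)
    have hδ : ∀ t : ℝ, t < min 1 (1 / (4 * (M₁ + M₂))) → t ≤ 1 ∧ (M₁ + M₂) * t ≤ 1 / 4 :=
      fun t ht => by
        refine ⟨(ht.trans_le (min_le_left _ _)).le, ?_⟩
        have h := (ht.trans_le (min_le_right _ _)).le
        calc (M₁ + M₂) * t ≤ (M₁ + M₂) * (1 / (4 * (M₁ + M₂))) := by gcongr
          _ = 1 / 4 := by field_simp
    have hA₁ := subset_polyHull1 (hK₁.image (mvEval_continuous p))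
    have hA₂ := subset_polyHull1 (hK₂.image (mvEval_continuous p))
    let F := F₁ * Polynomial.aeval p q + F₂ * (1 - Polynomial.aeval p q)
    have hF : ∀ w, mvEval F w = mvEval F₁ w * q.eval (mvEval p w) +
        mvEval F₂ w * (1 - q.eval (mvEval p w)) := fun w => by
      rw [← mvEval_aeval]
      simp [F, mvEval]
    have hFz : mvEval F z = 1 := by rw [hF, hF₁z, hF₂z]; ring
    have hle := hz F
    rw [hFz, norm_one] at hle
    have : sSup ((fun w => ‖mvEval F w‖) '' (K₁ ∪ K₂)) ≤ 3 / 4 := by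
      refine Real.sSup_le ?_ (by norm_num)
      rintro _ ⟨w, hw, rfl⟩
      simp only [hF]
      refine (norm_add_le _ _).trans ?_
      rw [norm_mul, norm_mul]
      have b1 := hM₁ w hw
      have b2 := hM₂ w hw
      rcases hw with hw | hw
      · have hq := hq1 _ (hA₁ (mem_image_of_mem _ hw))
        obtain ⟨d1, d2⟩ := hδ _ hq
        have hf := hF₁ w hw
        have hqn : ‖q.eval (mvEval p w)‖ ≤ 2 := by
          have := norm_add_le (q.eval (mvEval p w) - 1) 1
          rw [sub_add_cancel, norm_one] at this
          linarith
        rw [norm_sub_rev 1]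
        have e1 : ‖mvEval F₁ w‖ * ‖q.eval (mvEval p w)‖ ≤ 1 / 4 * 2 := by gcongr
        have e2 : ‖mvEval F₂ w‖ * ‖q.eval (mvEval p w) - 1‖ ≤
            (M₁ + M₂) * ‖q.eval (mvEval p w) - 1‖ := by gcongr; linarith
        linarith
      · have hq := hq2 _ (hA₂ (mem_image_of_mem _ hw))
        obtain ⟨d1, d2⟩ := hδ _ hq
        have hf := hF₂ w hw
        have hqn : ‖1 - q.eval (mvEval p w)‖ ≤ 2 := by
          have := norm_sub_le 1 (q.eval (mvEval p w))
          rw [norm_one] at this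
          linarith
        have e1 : ‖mvEval F₂ w‖ * ‖1 - q.eval (mvEval p w)‖ ≤ 1 / 4 * 2 := by gcongr
        have e2 : ‖mvEval F₁ w‖ * ‖q.eval (mvEval p w)‖ ≤
            (M₁ + M₂) * ‖q.eval (mvEval p w)‖ := by gcongr; linarith
        linarith
    linarith
  · exact union_subset (polyHull_mono hK subset_union_left) (polyHull_mono hK subset_union_right)

end
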